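/- arXiv:2511.02705 — 2 statements merged into one kernel-verified Lean document; each statement's English description precedes it below -/
import Mathlib

section
/- Let G be a ConstrainedCC instance, 𝒟 an edge-disjoint set of dangerous pairs, and let a, b, c be three distinct vertices with ab, bc, ac ∈ E⁺ and ac ∈ E_𝒟, with partner edge ρ(ac) = kℓ. Then every feasible clustering C of G makes a mistake at one of the three positive edges ab, bc, ρ(ac): either C(a) ≠ C(b), or C(b) ≠ C(c), or C(k) ≠ C(ℓ). (This justifies the HEAP constraints.) -/
/-!
A feasible clustering is constant on supernodes, because it agrees across every friendly pair
(`Feasible.eq_of_sameSuper`), and therefore separates hostile supernodes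
(`Feasible.ne_of_hostileSuper`). Let `(uv, wx)` be a dangerous pair, with `v`, `w` in one supernode
and `u`, `x` in hostile ones. If a clustering cut neither edge, then
`C u = C v = C w = C x`, contradicting hostility; so every dangerous pair contains a cut edge
(`IsDangerousPair.cut`). Finally, if `C a = C b` and `C b = C c`, then `ac` is not cut, so its
partner edge must be.
-/

open scoped Classical

namespace CCC

/-- A Constrained Correlation Clustering instance: a partition of the unordered
pairs of distinct vertices into positive edges `Ep` and negative edges `En`,
together with friendly constraints `F` and hostile constraints `H`. -/
structure CCInst (V : Type*) where
  Ep : Finset (Sym2 V)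
  En : Finset (Sym2 V)
  F : Finset (Sym2 V)
  H : Finset (Sym2 V)
  mem_Ep_iff : ∀ e : Sym2 V, e ∈ Ep ↔ (¬ e.IsDiag ∧ e ∉ En)
  not_isDiag_of_mem_En : ∀ e ∈ En, ¬ e.IsDiag
  not_isDiag_of_mem_F : ∀ e ∈ F, ¬ e.IsDiag
  not_isDiag_of_mem_H : ∀ e ∈ H, ¬ e.IsDiag

variable {V : Type*} [Fintype V] [DecidableEq V]

/-- `u` and `v` lie in the same supernode (connected component of `(V, F)`). -/
def sameSuper (G : CCInst V) (u v : V) : Prop :=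
  Relation.ReflTransGen (fun a b => s(a, b) ∈ G.F) u v

/-- The (distinct) supernodes of `u` and `v` are hostile. -/
def hostileSuper (G : CCInst V) (u v : V) : Prop :=
  ¬ sameSuper G u v ∧ ∃ a b : V, sameSuper G u a ∧ sameSuper G v b ∧ s(a, b) ∈ G.H

/-- A clustering is feasible if it merges all friendly pairs and separates all hostile pairs. -/
def Feasible (G : CCInst V) {L : Type*} (C : V → L) : Prop :=
  (∀ u v : V, s(u, v) ∈ G.F → C u = C v) ∧ ∀ u v : V, s(u, v) ∈ G.H → C u ≠ C v

/-- The cost of a clustering: positive edges cut plus negative edges not cut. -/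
noncomputable def cost (G : CCInst V) {L : Type*} (C : V → L) : ℕ :=
  (G.Ep.filter fun e => ¬ (e.map C).IsDiag).card +
    (G.En.filter fun e => (e.map C).IsDiag).card

/-- `G` is in consistent form. -/
def ConsistentForm (G : CCInst V) : Prop :=
  (∀ u v : V, u ≠ v → sameSuper G u v → s(u, v) ∈ G.Ep) ∧
    ∀ u v : V, hostileSuper G u v → s(u, v) ∈ G.En

/-- `G` is the consistent form of `G0`. -/
def IsConsistentFormOf (G G0 : CCInst V) : Prop :=
  G.F = G0.F ∧ G.H = G0.H ∧
    ∀ u v : V, u ≠ v →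
      (sameSuper G0 u v → s(u, v) ∈ G.Ep) ∧
      (hostileSuper G0 u v → s(u, v) ∈ G.En) ∧
      (¬ sameSuper G0 u v → ¬ hostileSuper G0 u v → (s(u, v) ∈ G.Ep ↔ s(u, v) ∈ G0.Ep))

/-- `(e, f)` is a dangerous pair: `e = ab`, `f = cd` are positive edges with
`s(b) = s(c)` and `(S(a), S(d)) ∈ H`. -/
def IsDangerousPair (G : CCInst V) (e f : Sym2 V) : Prop :=
  ∃ a b c d : V, e = s(a, b) ∧ f = s(c, d) ∧ e ∈ G.Ep ∧ f ∈ G.Ep ∧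
    sameSuper G b c ∧ hostileSuper G a d

/-- The edge `e` occurs in the pair `p`. -/
def InPair (e : Sym2 V) (p : Sym2 V × Sym2 V) : Prop := e = p.1 ∨ e = p.2

/-- Every edge occurs in at most one member of `D`. -/
def EdgeDisjoint (D : Finset (Sym2 V × Sym2 V)) : Prop :=
  ∀ p ∈ D, ∀ q ∈ D, ∀ e : Sym2 V, InPair e p → InPair e q → p = q

/-- `D` is an edge-disjoint set of dangerous pairs. -/
def DangerousFamily (G : CCInst V) (D : Finset (Sym2 V × Sym2 V)) : Prop :=
  (∀ p ∈ D, IsDangerousPair G p.1 p.2) ∧ EdgeDisjoint D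

/-- `D` is a maximal edge-disjoint set of dangerous pairs. -/
def MaximalDangerous (G : CCInst V) (D : Finset (Sym2 V × Sym2 V)) : Prop :=
  DangerousFamily G D ∧
    ∀ e f : Sym2 V, IsDangerousPair G e f → EdgeDisjoint (insert (e, f) D) → (e, f) ∈ D

/-- `E_𝒟`: the set of edges occurring in members of `D`. -/
def EDset (D : Finset (Sym2 V × Sym2 V)) : Set (Sym2 V) :=
  {e | ∃ p ∈ D, InPair e p}

/-- `f` is the partner edge `ρ(e)` of `e` in `D`. -/
def Partner (D : Finset (Sym2 V × Sym2 V)) (e f : Sym2 V) : Prop :=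
  (e, f) ∈ D ∨ (f, e) ∈ D

/-- The induced edge value `x_{uv}` of an LP solution. -/
noncomputable def xval (G : CCInst V) (Xp Xn : Sym2 V → ℝ) (e : Sym2 V) : ℝ :=
  if e ∈ G.Ep then Xp e else Xn e

/-- The LP objective value `∑_{uv} x_{uv}`, summed over all unordered pairs of
distinct vertices. -/
noncomputable def lpObj (G : CCInst V) (Xp Xn : Sym2 V → ℝ) : ℝ :=
  ∑ e ∈ Finset.univ.filter (fun e : Sym2 V => ¬ e.IsDiag), xval G Xp Xn e

/-- `(Xp, Xn)` is a feasible solution of the constrained covering LP (with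
HEAP constraints coming from the dangerous pairs `D`).  The variables are
indexed by unordered pairs of vertices but must only depend on the pair of
supernodes of the endpoints. -/
structure IsLPSol (G : CCInst V) (D : Finset (Sym2 V × Sym2 V))
    (Xp Xn : Sym2 V → ℝ) : Prop where
  nonneg_p : ∀ e : Sym2 V, 0 ≤ Xp e
  nonneg_n : ∀ e : Sym2 V, 0 ≤ Xn e
  congr_p : ∀ u v u' v' : V, sameSuper G u u' → sameSuper G v v' →
    Xp s(u, v) = Xp s(u', v')
  congr_n : ∀ u v u' v' : V, sameSuper G u u' → sameSuper G v v' →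
    Xn s(u, v) = Xn s(u', v')
  same_p : ∀ u v : V, sameSuper G u v → Xp s(u, v) = 0
  same_n : ∀ u v : V, sameSuper G u v → Xn s(u, v) = 1
  host_n : ∀ u v : V, hostileSuper G u v → Xn s(u, v) = 0
  host_p : ∀ u v : V, hostileSuper G u v → Xp s(u, v) = 1
  tri_ppn : ∀ a b c : V, ¬ sameSuper G a b → ¬ sameSuper G b c → ¬ sameSuper G a c →
    1 ≤ Xp s(a, b) + Xp s(b, c) + Xn s(a, c)
  tri_pnp : ∀ a b c : V, ¬ sameSuper G a b → ¬ sameSuper G b c → ¬ sameSuper G a c →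
    1 ≤ Xp s(a, b) + Xn s(b, c) + Xp s(a, c)
  tri_npp : ∀ a b c : V, ¬ sameSuper G a b → ¬ sameSuper G b c → ¬ sameSuper G a c →
    1 ≤ Xn s(a, b) + Xp s(b, c) + Xp s(a, c)
  pair : ∀ u v : V, 1 ≤ Xp s(u, v) + Xn s(u, v)
  heap : ∀ a b c k l : V, s(a, b) ∈ G.Ep → s(b, c) ∈ G.Ep → s(a, c) ∈ G.Ep →
    ¬ sameSuper G a b → ¬ sameSuper G c b → s(a, c) ∈ EDset D →
    Partner D s(a, c) s(k, l) →
    1 ≤ xval G Xp Xn s(a, b) + xval G Xp Xn s(b, c) + xval G Xp Xn s(k, l)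

/-- `uv ∈ Ê⁺`: positive edges of the auxiliary graph `Ĝ`. -/
def hatPos (G : CCInst V) (D : Finset (Sym2 V × Sym2 V)) (Xp Xn : Sym2 V → ℝ)
    (u v : V) : Prop :=
  u ≠ v ∧ (sameSuper G u v ∨
    ((∃ a b : V, sameSuper G u a ∧ sameSuper G v b ∧ s(a, b) ∈ G.Ep ∧ s(a, b) ∉ EDset D) ∧
      Xp s(u, v) < min (Xn s(u, v)) (2 / 3)))

/-- `uv ∈ Ê⁻`: negative edges of the auxiliary graph `Ĝ`. -/
def hatNeg (G : CCInst V) (D : Finset (Sym2 V × Sym2 V)) (Xp Xn : Sym2 V → ℝ)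
    (u v : V) : Prop :=
  u ≠ v ∧ ¬ hatPos G D Xp Xn u v

/-- `Ê⁺` as a predicate on unordered pairs. -/
def hatPosE (G : CCInst V) (D : Finset (Sym2 V × Sym2 V)) (Xp Xn : Sym2 V → ℝ)
    (e : Sym2 V) : Prop :=
  ∃ u v : V, e = s(u, v) ∧ hatPos G D Xp Xn u v

/-- `Ê⁻` as a predicate on unordered pairs. -/
def hatNegE (G : CCInst V) (D : Finset (Sym2 V × Sym2 V)) (Xp Xn : Sym2 V → ℝ)
    (e : Sym2 V) : Prop :=
  ¬ e.IsDiag ∧ ¬ hatPosE G D Xp Xn e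

/-- `E^{+-} = E⁺ ∩ Ê⁻`. -/
noncomputable def Epm (G : CCInst V) (D : Finset (Sym2 V × Sym2 V)) (Xp Xn : Sym2 V → ℝ) :
    Finset (Sym2 V) :=
  G.Ep.filter fun e => hatNegE G D Xp Xn e

/-- The balanced edges `E^b ⊆ E^{+-}`. -/
noncomputable def Eb (G : CCInst V) (D : Finset (Sym2 V × Sym2 V)) (Xp Xn : Sym2 V → ℝ) :
    Finset (Sym2 V) :=
  (Epm G D Xp Xn).filter fun e =>
    e ∈ EDset D ∧ ∀ f : Sym2 V, Partner D e f → f ∈ Epm G D Xp Xn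

/-- The other flipped positive edges `E^o = E^{+-} \ E^b`. -/
noncomputable def Eo (G : CCInst V) (D : Finset (Sym2 V × Sym2 V)) (Xp Xn : Sym2 V → ℝ) :
    Finset (Sym2 V) :=
  Epm G D Xp Xn \ Eb G D Xp Xn

/-- A signed graph (given by its positive-edge relation `pos`) is pivot-safe for `G`. -/
def PivotSafe (G : CCInst V) (pos : V → V → Prop) : Prop :=
  (∀ i j : V, i ≠ j → sameSuper G i j →
    pos i j ∧ ∀ k : V, k ≠ i → k ≠ j → (pos i k ↔ pos j k)) ∧
  ∀ i j : V, hostileSuper G i j → ¬ pos i j ∧ ∀ k : V, ¬ (pos i k ∧ pos j k)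

/-- `PivotClust pos S C`: the assignment `C` (mapping every vertex of `S` to
the pivot of its cluster) is obtainable by running the pivot procedure on the
vertex set `S` of the signed graph whose positive edges are given by `pos`. -/
inductive PivotClust (pos : V → V → Prop) : Finset V → (V → V) → Prop where
  | nil (C : V → V) : PivotClust pos ∅ C
  | step (S : Finset V) (p : V) (C : V → V) (hp : p ∈ S)
      (h : PivotClust pos (S.filter fun v => ¬ (v = p ∨ pos p v)) C) :
      PivotClust pos S (fun v => if v ∈ S ∧ (v = p ∨ pos p v) then p else C v)

/-- `T_p⁺` inside the vertex subset `W`. -/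
noncomputable def Tpos (G : CCInst V) (D : Finset (Sym2 V × Sym2 V)) (Xp Xn : Sym2 V → ℝ)
    (W : Finset V) (p : V) : Finset (Sym2 V) :=
  Finset.univ.filter fun e : Sym2 V => ∃ u v : V, e = s(u, v) ∧ u ∈ W ∧ v ∈ W ∧
    hatPos G D Xp Xn u v ∧ hatPos G D Xp Xn p u ∧ hatNeg G D Xp Xn p v

/-- `T_p⁻` inside the vertex subset `W`. -/
noncomputable def Tneg (G : CCInst V) (D : Finset (Sym2 V × Sym2 V)) (Xp Xn : Sym2 V → ℝ)
    (W : Finset V) (p : V) : Finset (Sym2 V) :=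
  Finset.univ.filter fun e : Sym2 V => ∃ u v : V, e = s(u, v) ∧ u ∈ W ∧ v ∈ W ∧
    hatNeg G D Xp Xn u v ∧ hatPos G D Xp Xn p u ∧ hatPos G D Xp Xn p v

/-- `A_p⁻ = T_p⁻ \ E^b`. -/
noncomputable def Aneg (G : CCInst V) (D : Finset (Sym2 V × Sym2 V)) (Xp Xn : Sym2 V → ℝ)
    (W : Finset V) (p : V) : Finset (Sym2 V) :=
  (Tneg G D Xp Xn W p).filter fun e => e ∉ Eb G D Xp Xn

/-- `B_p⁻ = T_p⁻ ∩ E^b`. -/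
noncomputable def Bneg (G : CCInst V) (D : Finset (Sym2 V × Sym2 V)) (Xp Xn : Sym2 V → ℝ)
    (W : Finset V) (p : V) : Finset (Sym2 V) :=
  (Tneg G D Xp Xn W p).filter fun e => e ∈ Eb G D Xp Xn

/-- `(Xp, Xn)` is a feasible solution of the friendly covering LP (no hostile
constraints and no HEAP constraints). -/
structure IsFriendlyLPSol (G : CCInst V) (Xp Xn : Sym2 V → ℝ) : Prop where
  nonneg_p : ∀ e : Sym2 V, 0 ≤ Xp e
  nonneg_n : ∀ e : Sym2 V, 0 ≤ Xn e
  congr_p : ∀ u v u' v' : V, sameSuper G u u' → sameSuper G v v' →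
    Xp s(u, v) = Xp s(u', v')
  congr_n : ∀ u v u' v' : V, sameSuper G u u' → sameSuper G v v' →
    Xn s(u, v) = Xn s(u', v')
  same_p : ∀ u v : V, sameSuper G u v → Xp s(u, v) = 0
  same_n : ∀ u v : V, sameSuper G u v → Xn s(u, v) = 1
  tri_ppn : ∀ a b c : V, ¬ sameSuper G a b → ¬ sameSuper G b c → ¬ sameSuper G a c →
    1 ≤ Xp s(a, b) + Xp s(b, c) + Xn s(a, c)
  tri_pnp : ∀ a b c : V, ¬ sameSuper G a b → ¬ sameSuper G b c → ¬ sameSuper G a c →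
    1 ≤ Xp s(a, b) + Xn s(b, c) + Xp s(a, c)
  tri_npp : ∀ a b c : V, ¬ sameSuper G a b → ¬ sameSuper G b c → ¬ sameSuper G a c →
    1 ≤ Xn s(a, b) + Xp s(b, c) + Xp s(a, c)
  pair : ∀ u v : V, 1 ≤ Xp s(u, v) + Xn s(u, v)

/-- `(e, f)` is a dangerous triangle in a HostileCC instance: positive edges
`e = ab`, `f = bc` with `ac ∈ H`. -/
def IsDangerousTriangle (G : CCInst V) (e f : Sym2 V) : Prop :=
  ∃ a b c : V, e = s(a, b) ∧ f = s(b, c) ∧ e ∈ G.Ep ∧ f ∈ G.Ep ∧ s(a, c) ∈ G.H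

/-- A feasible clustering is constant on each supernode. -/
theorem Feasible.eq_of_sameSuper {V L : Type*} {G : CCInst V} {C : V → L} (hC : Feasible G C)
    {u v : V} (h : sameSuper G u v) : C u = C v := by
  induction h with
  | refl => rfl
  | tail _ h ih => exact ih.trans (hC.1 _ _ h)

/-- A feasible clustering separates hostile supernodes. -/
theorem Feasible.ne_of_hostileSuper {V L : Type*} {G : CCInst V} {C : V → L}
    (hC : Feasible G C) {u v : V} (h : hostileSuper G u v) : C u ≠ C v := by
  obtain ⟨-, x, y, hx, hy, hxy⟩ := h
  rw [hC.eq_of_sameSuper hx, hC.eq_of_sameSuper hy]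
  exact hC.2 x y hxy

/-- A feasible clustering cuts at least one edge of every dangerous pair; an edge `e` is uncut
exactly when its image `e.map C` is a diagonal pair. -/
theorem IsDangerousPair.cut {V L : Type*} {G : CCInst V} {C : V → L} (hC : Feasible G C)
    {e f : Sym2 V} (h : IsDangerousPair G e f) :
    ¬ ((e.map C).IsDiag ∧ (f.map C).IsDiag) := by
  obtain ⟨u, v, w, x, rfl, rfl, -, -, hvw, hux⟩ := h
  simp only [Sym2.map_mk, Sym2.mk_isDiag_iff]
  rintro ⟨huv, hwx⟩
  exact hC.ne_of_hostileSuper hux (huv.trans ((hC.eq_of_sameSuper hvw).trans hwx))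

/-- If `ab, bc, ac` are positive edges on distinct vertices with
`ac ∈ E_𝒟` and partner edge `ρ(ac) = kl`, then every feasible clustering makes a
mistake at one of `ab`, `bc`, `ρ(ac)` (justifying the HEAP constraints). -/
theorem stmt3 {V : Type*} [Fintype V] [DecidableEq V] {L : Type*} (G : CCInst V)
    (D : Finset (Sym2 V × Sym2 V)) (hD : DangerousFamily G D)
    (a b c k l : V) (hab' : a ≠ b) (hbc' : b ≠ c) (hac' : a ≠ c)
    (hab : s(a, b) ∈ G.Ep) (hbc : s(b, c) ∈ G.Ep) (hac : s(a, c) ∈ G.Ep)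
    (hmem : s(a, c) ∈ EDset D) (hpart : Partner D s(a, c) s(k, l))
    (C : V → L) (hC : Feasible G C) :
    C a ≠ C b ∨ C b ≠ C c ∨ C k ≠ C l := by
  by_contra! h
  obtain ⟨h1, h2, h3⟩ := h
  have hac_uncut : (s(a, c).map C).IsDiag := by simpa using h1.trans h2
  have hkl_uncut : (s(k, l).map C).IsDiag := by simpa using h3
  rcases hpart with h | h
  · exact (hD.1 _ h).cut hC ⟨hac_uncut, hkl_uncut⟩
  · exact (hD.1 _ h).cut hC ⟨hkl_uncut, hac_uncut⟩

end CCC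
end

section
/- Let G be a consistent-form ConstrainedCC instance, 𝒟 a maximal edge-disjoint set of dangerous pairs, and (X⁺, X⁻) a feasible solution of the constrained covering LP with induced edge values x. Then for every edge ij ∈ E_𝒟, x_{ij} + x_{ρ(ij)} ≥ 1. -/
/-!
If `e = ab` and `f = cd` form a dangerous pair with `s(b) = s(c)`, the supernode of `b` and `c`
lies at the middle of a path from `S(a)` to the hostile supernode `S(d)`. Consistent form forces
these three supernodes to be distinct, since otherwise `ab` or `cd` would be a negative edge. The
triangle constraint `X⁺_{AB} + X⁺_{BD} + X⁻_{AD} ≥ 1` together with `X⁻_{AD} = 0` then gives the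
bound.
-/

open scoped Classical

namespace CCC

variable {V : Type*} [Fintype V] [DecidableEq V]

theorem sameSuper.symm' {V : Type*} {G : CCInst V} {u v : V} (h : sameSuper G u v) :
    sameSuper G v u := by
  induction h with
  | refl => exact .refl
  | tail _ hxy ih => exact .head (by rwa [Sym2.eq_swap]) ih

theorem hostileSuper.congr' {V : Type*} {G : CCInst V} {u v u' v' : V}
    (h : hostileSuper G u v) (hu : sameSuper G u u') (hv : sameSuper G v v') :
    hostileSuper G u' v' := by
  obtain ⟨hn, a, b, ha, hb, hab⟩ := h
  exact ⟨fun h' => hn ((hu.trans h').trans hv.symm'), a, b,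
    hu.symm'.trans ha, hv.symm'.trans hb, hab⟩

theorem not_hostileSuper_of_mem_Ep {V : Type*} {G : CCInst V} (hG : ConsistentForm G)
    {u v : V} (h : s(u, v) ∈ G.Ep) : ¬ hostileSuper G u v :=
  fun hh => ((G.mem_Ep_iff _).1 h).2 (hG.2 u v hh)

/-- The bound for an arbitrary dangerous pair, whether or not it belongs to `D`. -/
theorem one_le_of_isDangerousPair {V : Type*} [Fintype V] [DecidableEq V] {G : CCInst V}
    {D : Finset (Sym2 V × Sym2 V)} {Xp Xn : Sym2 V → ℝ}
    (hG : ConsistentForm G) (hsol : IsLPSol G D Xp Xn) {e f : Sym2 V}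
    (h : IsDangerousPair G e f) :
    1 ≤ xval G Xp Xn e + xval G Xp Xn f := by
  obtain ⟨a, b, c, d, rfl, rfl, he, hf, hbc, had⟩ := h
  have hab : ¬ sameSuper G a b := fun h' =>
    not_hostileSuper_of_mem_Ep hG hf (had.congr' (h'.trans hbc) .refl)
  have hbd : ¬ sameSuper G b d := fun h' =>
    not_hostileSuper_of_mem_Ep hG he (had.congr' .refl h'.symm')
  have htri := hsol.tri_ppn a b d hab hbd had.1
  have hcd := hsol.congr_p b d c d hbc .refl
  have hn := hsol.host_n a d had
  simp only [xval, he, hf, if_true]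
  linarith

/-- Lemma 3.5 (a).  For every edge `e ∈ E_𝒟` with partner
`f = ρ(e)` we have `x_e + x_{ρ(e)} ≥ 1`. -/
theorem stmt7 {V : Type*} [Fintype V] [DecidableEq V] (G : CCInst V)
    (D : Finset (Sym2 V × Sym2 V)) (Xp Xn : Sym2 V → ℝ)
    (hG : ConsistentForm G) (hD : MaximalDangerous G D)
    (hsol : IsLPSol G D Xp Xn)
    (e f : Sym2 V) (he : e ∈ EDset D) (hpart : Partner D e f) :
    1 ≤ xval G Xp Xn e + xval G Xp Xn f := by
  rcases hpart with h | h
  · exact one_le_of_isDangerousPair hG hsol (hD.1.1 _ h)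
  · rw [add_comm]
    exact one_le_of_isDangerousPair hG hsol (hD.1.1 _ h)

end CCC
end
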